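/- arXiv:2103.14246 — 2 statements merged into one kernel-verified Lean document; each statement's English description precedes it below -/
import Mathlib

section
/- With the drifted one-step Bellman setup, the residual error of the drifted Taylor estimator satisfies ΔY − ΔŶ^drift = δ − E[δ | 𝒢] almost surely, where ΔY := V'(X') − V(X). -/
open MeasureTheory ProbabilityTheory Matrix

/-- The standard Gaussian measure on `ℝⁿ` (coordinates i.i.d. `N(0,1)`). -/
noncomputable def stdGaussian (n : ℕ) : Measure (Fin n → ℝ) :=
  Measure.pi fun _ => gaussianReal 0 1

/-- The gradient of `f : ℝⁿ → ℝ`, as a vector of partial derivatives. -/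
noncomputable def grad {n : ℕ} (f : (Fin n → ℝ) → ℝ) (x : Fin n → ℝ) : Fin n → ℝ :=
  fun i => fderiv ℝ f x (Pi.single i 1)

/-- The Hessian matrix of `f : ℝⁿ → ℝ`. -/
noncomputable def hess {n : ℕ} (f : (Fin n → ℝ) → ℝ) (x : Fin n → ℝ) :
    Matrix (Fin n) (Fin n) ℝ :=
  Matrix.of fun i j => fderiv ℝ (fun y => fderiv ℝ f y (Pi.single j 1)) x (Pi.single i 1)

lemma aux_condExp {Ω β E : Type*} [mΩ : MeasurableSpace Ω] [mβ : MeasurableSpace β]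
    [mE : MeasurableSpace E] [StandardBorelSpace E] [Nonempty E]
    (P : Measure Ω) [IsProbabilityMeasure P] (U : Ω → β) (hU : Measurable U)
    (W : Ω → E) (hW : Measurable W) (hind : IndepFun U W P)
    (f : β × E → ℝ) (hf : Measurable f) (hfi : Integrable (fun ω => f (U ω, W ω)) P) :
    (∀ᵐ ω ∂P, Integrable (fun w => f (U ω, w)) (P.map W)) ∧
    P[fun ω => f (U ω, W ω) | mβ.comap U] =ᵐ[P] fun ω => ∫ w, f (U ω, w) ∂(P.map W) := by
  have hmap := (indepFun_iff_map_prod_eq_prod_map_map hU.aemeasurable hW.aemeasurable).1 hind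
  have : IsProbabilityMeasure (P.map W) := Measure.isProbabilityMeasure_map hW.aemeasurable
  have : IsProbabilityMeasure (P.map U) := Measure.isProbabilityMeasure_map hU.aemeasurable
  constructor
  · have h1 : Integrable f (P.map (fun ω => (U ω, W ω))) :=
      (integrable_map_measure hf.aestronglyMeasurable (hU.prodMk hW).aemeasurable).2 hfi
    rw [hmap] at h1
    exact ae_of_ae_map hU.aemeasurable h1.prod_right_ae
  · have h1 := condExp_prod_ae_eq_integral_condDistrib (μ := P) hU hW.aemeasurable
      hf.stronglyMeasurable hfi
    have h2 : condDistrib W U P =ᵐ[P.map U] Kernel.const β (P.map W) := by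
      apply condDistrib_ae_eq_of_measure_eq_compProd U hW.aemeasurable
      rw [hmap, Measure.compProd_const]
    have h3 := ae_of_ae_map hU.aemeasurable h2
    filter_upwards [h1, h3] with ω h1 h3
    rw [h1, h3, Kernel.const_apply]

lemma aux_memLp (n : ℕ) (i : Fin n) : MemLp (fun w : Fin n → ℝ => w i) 2 (_root_.stdGaussian n) :=
  (memLp_id_gaussianReal' (μ := 0) (v := 1) 2 (by simp)).comp_measurePreserving
    (measurePreserving_eval (fun _ : Fin n => gaussianReal 0 1) i)

instance aux_prob (n : ℕ) : IsProbabilityMeasure (_root_.stdGaussian n) := by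
  unfold _root_.stdGaussian; infer_instance

lemma aux_int1 (n : ℕ) (i : Fin n) : ∫ w, w i ∂(_root_.stdGaussian n) = 0 := by
  have h := (measurePreserving_eval (fun _ : Fin n => gaussianReal 0 1) i)
  have h2 := integral_map (μ := _root_.stdGaussian n) (φ := fun w : Fin n → ℝ => w i)
    (f := fun x : ℝ => x) (measurable_pi_apply i).aemeasurable (by fun_prop)
  rw [← h2]
  have : Measure.map (fun w : Fin n → ℝ => w i) (_root_.stdGaussian n) = gaussianReal 0 1 := h.map_eq
  rw [this, integral_id_gaussianReal]

lemma aux_int2 (n : ℕ) (i j : Fin n) :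
    ∫ w, w i * w j ∂(_root_.stdGaussian n) = (1 : Matrix (Fin n) (Fin n) ℝ) i j := by
  by_cases hij : i = j
  · subst hij
    have h := (measurePreserving_eval (fun _ : Fin n => gaussianReal 0 1) i)
    have h2 := integral_map (μ := _root_.stdGaussian n) (φ := fun w : Fin n → ℝ => w i)
      (f := fun x : ℝ => x * x) (measurable_pi_apply i).aemeasurable (by fun_prop)
    rw [← h2]
    have : Measure.map (fun w : Fin n → ℝ => w i) (_root_.stdGaussian n) = gaussianReal 0 1 :=
      h.map_eq
    rw [this]
    have hv := variance_fun_id_gaussianReal (μ := 0) (v := 1)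
    rw [variance_of_integral_eq_zero (by fun_prop) integral_id_gaussianReal] at hv
    simpa [pow_two] using hv
  · have hI : iIndepFun (fun (i : Fin n) (w : Fin n → ℝ) => w i) (_root_.stdGaussian n) :=
      iIndepFun_pi (μ := fun _ : Fin n => gaussianReal 0 1) (X := fun _ x => x)
        (fun i => by fun_prop)
    have h := (hI.indepFun hij).integral_mul_eq_mul_integral
      (aux_memLp n i).aestronglyMeasurable (aux_memLp n j).aestronglyMeasurable
    have h' : ∫ w, w i * w j ∂(_root_.stdGaussian n)
      = (∫ w, w i ∂(_root_.stdGaussian n)) * ∫ w, w j ∂(_root_.stdGaussian n) := h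
    rw [h', aux_int1, Matrix.one_apply_ne hij, zero_mul]

lemma aux_poly (n : ℕ) (y : ℝ) (z d : Fin n → ℝ) (M : Matrix (Fin n) (Fin n) ℝ) :
    Integrable (fun w : Fin n → ℝ => y + (∑ i, z i * (w + d) i)
      + (1 / 2) * ∑ i, (w + d) i * M.mulVec (w + d) i) (_root_.stdGaussian n) ∧
    ∫ w, (y + (∑ i, z i * (w + d) i)
      + (1 / 2) * ∑ i, (w + d) i * M.mulVec (w + d) i) ∂(_root_.stdGaussian n)
    = y + (∑ i, z i * d i) + (1 / 2) * ∑ i, ∑ j, M i j * ((1 : Matrix (Fin n) (Fin n) ℝ) i j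
        + d i * d j) := by
  have hl : ∀ i, Integrable (fun w : Fin n → ℝ => w i) (_root_.stdGaussian n) :=
    fun i => (aux_memLp n i).integrable (by simp)
  have hq : ∀ i j, Integrable (fun w : Fin n → ℝ => w i * w j) (_root_.stdGaussian n) :=
    fun i j => (aux_memLp n i).integrable_mul (aux_memLp n j)
  have h1 : ∀ i, Integrable (fun w : Fin n → ℝ => z i * (w i + d i)) (_root_.stdGaussian n) :=
    fun i => ((hl i).add (integrable_const _)).const_mul _
  have e2 : ∀ i j, (fun w : Fin n → ℝ => (w i + d i) * (M i j * (w j + d j)))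
      = fun w => M i j * (w i * w j) + ((M i j * d j) * w i + ((M i j * d i) * w j
        + M i j * (d i * d j))) := by
    intro i j; funext w; ring
  have a1 : ∀ i j, Integrable (fun w : Fin n → ℝ => M i j * (w i * w j)) (_root_.stdGaussian n) :=
    fun i j => (hq i j).const_mul _
  have a2 : ∀ i (c : ℝ), Integrable (fun w : Fin n → ℝ => c * w i) (_root_.stdGaussian n) :=
    fun i c => (hl i).const_mul _
  have a3 : ∀ c : ℝ, Integrable (fun _ : Fin n → ℝ => c) (_root_.stdGaussian n) :=
    fun c => integrable_const _
  have h2 : ∀ i j, Integrable (fun w : Fin n → ℝ => (w i + d i) * (M i j * (w j + d j)))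
      (_root_.stdGaussian n) := by
    intro i j
    rw [e2]
    exact (a1 i j).add ((a2 _ _).add ((a2 _ _).add (a3 _)))
  have s1 : Integrable (fun w : Fin n → ℝ => ∑ i, z i * (w i + d i)) (_root_.stdGaussian n) :=
    integrable_finsetSum _ fun i _ => h1 i
  have s2 : ∀ i, Integrable (fun w : Fin n → ℝ => ∑ j, (w i + d i) * (M i j * (w j + d j)))
    (_root_.stdGaussian n) := fun i => integrable_finsetSum _ fun j _ => h2 i j
  have s3 : Integrable (fun w : Fin n → ℝ => ∑ i, ∑ j, (w i + d i) * (M i j * (w j + d j)))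
    (_root_.stdGaussian n) := integrable_finsetSum _ fun i _ => s2 i
  simp only [Matrix.mulVec, dotProduct, Pi.add_apply, Finset.mul_sum (Finset.univ) _ (_ + _)]
  refine ⟨((a3 y).add s1).add (s3.const_mul _), ?_⟩
  have i1 : ∀ i, ∫ w, z i * (w i + d i) ∂(_root_.stdGaussian n) = z i * d i := by
    intro i
    rw [integral_const_mul, integral_add (hl i) (a3 _), aux_int1]; simp
  have i2 : ∀ i j, ∫ w, (w i + d i) * (M i j * (w j + d j)) ∂(_root_.stdGaussian n)
      = M i j * ((1 : Matrix (Fin n) (Fin n) ℝ) i j + d i * d j) := by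
    intro i j
    have b1 : Integrable (fun w : Fin n → ℝ => (M i j * d i) * w j + M i j * (d i * d j))
      (_root_.stdGaussian n) := (a2 _ _).add (a3 _)
    have b2 : Integrable (fun w : Fin n → ℝ => (M i j * d j) * w i + ((M i j * d i) * w j
      + M i j * (d i * d j))) (_root_.stdGaussian n) := (a2 _ _).add b1
    rw [e2, integral_add (a1 i j) b2, integral_add (a2 _ _) b1, integral_add (a2 _ _) (a3 _),
      integral_const_mul, integral_const_mul, integral_const_mul, aux_int1, aux_int1, aux_int2]
    simp; ring
  have c1 : Integrable (fun w : Fin n → ℝ => y + ∑ i, z i * (w i + d i)) (_root_.stdGaussian n) :=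
    (a3 y).add s1
  rw [integral_add c1 (s3.const_mul _), integral_add (a3 y) s1, integral_const_mul,
    integral_finsetSum _ fun i _ => h1 i, integral_finsetSum _ fun i _ => s2 i]
  simp only [i1]
  congr 1
  · simp
  · congr 1
    refine Finset.sum_congr rfl fun i _ => ?_
    rw [integral_finsetSum _ fun j _ => h2 i j]
    exact Finset.sum_congr rfl fun j _ => i2 i j

lemma aux_det {Ω : Type*} [MeasurableSpace Ω] {n : ℕ} (A : Ω → Matrix (Fin n) (Fin n) ℝ)
    (hA : ∀ i j, Measurable fun ω => A ω i j) : Measurable fun ω => (A ω).det := by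
  simp only [Matrix.det_apply]
  refine Finset.measurable_sum _ fun s _ => ?_
  exact (Finset.measurable_prod _ fun i _ => hA _ _).const_smul _

lemma aux_inv {Ω : Type*} [MeasurableSpace Ω] {n : ℕ} (A : Ω → Matrix (Fin n) (Fin n) ℝ)
    (hA : ∀ i j, Measurable fun ω => A ω i j) (i j : Fin n) :
    Measurable fun ω => (A ω)⁻¹ i j := by
  simp only [Matrix.inv_def, Matrix.smul_apply, Ring.inverse_eq_inv', smul_eq_mul,
    Matrix.adjugate_apply]
  refine (aux_det A hA).inv.mul (aux_det _ fun k l => ?_)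
  simp only [Matrix.updateRow_apply]
  split_ifs
  · exact measurable_const
  · exact hA _ _

lemma aux_grad {n : ℕ} (f : (Fin n → ℝ) → ℝ) (hf : ContDiff ℝ 2 f) (i : Fin n) :
    Measurable fun x => grad f x i := by
  have h : Continuous (fderiv ℝ f) := hf.continuous_fderiv (by norm_num)
  exact (h.clm_apply continuous_const).measurable

lemma aux_hess {n : ℕ} (f : (Fin n → ℝ) → ℝ) (hf : ContDiff ℝ 2 f) (i j : Fin n) :
    Measurable fun x => hess f x i j := by
  have h : ContDiff ℝ 1 (fderiv ℝ f) := hf.fderiv_right (by norm_num)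
  have h2 : ContDiff ℝ 1 (fun y => fderiv ℝ f y (Pi.single j 1)) := h.clm_apply contDiff_const
  exact ((h2.continuous_fderiv (by norm_num)).clm_apply continuous_const).measurable

lemma aux_meas {Ω : Type*} [MeasurableSpace Ω] {n : ℕ} (X K : Ω → Fin n → ℝ) (hX : Measurable X)
    (hK : Measurable K)
    (F : (Fin n → ℝ) → Fin n → ℝ) (hF : Measurable F)
    (S : (Fin n → ℝ) → Matrix (Fin n) (Fin n) ℝ) (hS : ∀ i j, Measurable fun x => S x i j)
    (D : Ω → Fin n → ℝ) (hD : ∀ ω, D ω = (S (X ω))⁻¹.mulVec (F (X ω) - K ω))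
    (XbP : Ω → Fin n → ℝ) (hXbP : ∀ ω, XbP ω = X ω + K ω)
    (V' : (Fin n → ℝ) → ℝ) (hV'meas : Measurable V')
    (Vt : (Fin n → ℝ) → ℝ) (hVt : ContDiff ℝ 2 Vt)
    (Zb : Ω → Fin n → ℝ) (hZb : ∀ ω, Zb ω = (S (X ω))ᵀ.mulVec (grad Vt (XbP ω)))
    (Mb : Ω → Matrix (Fin n) (Fin n) ℝ)
    (hMb : ∀ ω, Mb ω = (S (X ω))ᵀ * hess Vt (XbP ω) * S (X ω)) :
    Measurable (fun p : Ω × (Fin n → ℝ) =>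
      V' (X p.1 + F (X p.1) + (S (X p.1)).mulVec p.2)
      - (Vt (XbP p.1) + (∑ i, Zb p.1 i * (p.2 + D p.1) i)
      + (1 / 2) * ∑ i, (p.2 + D p.1) i * (Mb p.1).mulVec (p.2 + D p.1) i)) := by
  have mS : ∀ i j, Measurable fun ω => S (X ω) i j := fun i j => (hS i j).comp hX
  have mF : ∀ i, Measurable fun ω => F (X ω) i := fun i => (measurable_pi_apply i).comp (hF.comp hX)
  have mK : ∀ i, Measurable fun ω => K ω i := fun i => (measurable_pi_apply i).comp hK
  have mX : ∀ i, Measurable fun ω => X ω i := fun i => (measurable_pi_apply i).comp hX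
  have mSi := aux_inv (fun ω => S (X ω)) mS
  have mD : ∀ i, Measurable fun ω => D ω i := by
    intro i
    simp only [hD, Matrix.mulVec, dotProduct, Pi.sub_apply]
    exact Finset.measurable_sum _ fun j _ => (mSi i j).mul ((mF j).sub (mK j))
  have mXb : Measurable XbP := by
    rw [funext hXbP]; exact hX.add hK
  have mg : ∀ i, Measurable fun ω => grad Vt (XbP ω) i := fun i => (aux_grad Vt hVt i).comp mXb
  have mh : ∀ i j, Measurable fun ω => hess Vt (XbP ω) i j :=
    fun i j => (aux_hess Vt hVt i j).comp mXb
  have mZ : ∀ i, Measurable fun ω => Zb ω i := by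
    intro i
    simp only [hZb, Matrix.mulVec, dotProduct, Matrix.transpose_apply]
    exact Finset.measurable_sum _ fun j _ => (mS j i).mul (mg j)
  have mM : ∀ i j, Measurable fun ω => Mb ω i j := by
    intro i j
    simp only [hMb, Matrix.mul_apply, Matrix.transpose_apply]
    exact Finset.measurable_sum _ fun k _ =>
      (Finset.measurable_sum _ fun l _ => (mS l i).mul (mh l k)).mul (mS k j)
  have mw : ∀ i, Measurable fun p : Ω × (Fin n → ℝ) => p.2 i :=
    fun i => (measurable_pi_apply i).comp measurable_snd
  have mwd : ∀ i, Measurable fun p : Ω × (Fin n → ℝ) => p.2 i + D p.1 i :=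
    fun i => (mw i).add ((mD i).comp measurable_fst)
  refine (hV'meas.comp ?_).sub (((hVt.continuous.measurable.comp (mXb.comp measurable_fst)).add
    ?_).add (Measurable.const_mul ?_ _))
  · refine measurable_pi_lambda _ fun i => ?_
    simp only [Pi.add_apply, Matrix.mulVec, dotProduct]
    exact (((mX i).comp measurable_fst).add ((mF i).comp measurable_fst)).add
      (Finset.measurable_sum _ fun j _ => ((mS i j).comp measurable_fst).mul (mw j))
  · simp only [Pi.add_apply]
    exact Finset.measurable_sum _ fun j _ => ((mZ j).comp measurable_fst).mul (mwd j)
  · simp only [Pi.add_apply, Matrix.mulVec, dotProduct]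
    exact Finset.measurable_sum _ fun i _ => (mwd i).mul
      (Finset.measurable_sum _ fun j _ => ((mM i j).comp measurable_fst).mul (mwd j))

/-- **Residual error of the drifted Taylor estimator.**
With the drifted one-step Bellman setup (drift `K`, `D := Σ(X)⁻¹(F(X) − K)` bounded,
`W^P := W + D`, `X̄^P := X + K`), the drifted Taylor estimator satisfies
`ΔY − ΔŶ^drift = δ − E[δ | 𝒢]` almost surely, where `ΔY := V'(X') − V(X)`. -/
theorem drifted_taylor_estimator_residual
    {Ω : Type*} (𝒢 : MeasurableSpace Ω) [mΩ : MeasurableSpace Ω]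
    (P : Measure Ω) [IsProbabilityMeasure P]
    {n : ℕ} (h𝒢 : 𝒢 ≤ mΩ)
    -- the noise W : i.i.d. standard normal coordinates, independent of 𝒢
    (W : Ω → Fin n → ℝ) (hWmeas : Measurable W)
    (hWlaw : Measure.map W P = stdGaussian n)
    (hWindep : Indep (MeasurableSpace.comap W inferInstance) 𝒢 P)
    -- the current state X and the drift K are 𝒢-measurable; dynamics data F, Σ, L
    (X K : Ω → Fin n → ℝ) (hX : Measurable[𝒢] X) (hK : Measurable[𝒢] K)
    (F : (Fin n → ℝ) → Fin n → ℝ) (hF : Measurable F)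
    (S : (Fin n → ℝ) → Matrix (Fin n) (Fin n) ℝ) (hS : ∀ i j, Measurable fun x => S x i j)
    (hSinv : ∀ᵐ ω ∂P, IsUnit (S (X ω)).det)
    (L : (Fin n → ℝ) → ℝ) (hL : Measurable L)
    -- D := Σ(X)⁻¹ (F(X) − K), bounded; W^P := W + D; X̄^P := X + K
    (D : Ω → Fin n → ℝ) (hD : ∀ ω, D ω = (S (X ω))⁻¹.mulVec (F (X ω) - K ω))
    (hDbound : ∃ C, ∀ ω i, |D ω i| ≤ C)
    (WP : Ω → Fin n → ℝ) (hWP : ∀ ω, WP ω = W ω + D ω)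
    (XbP : Ω → Fin n → ℝ) (hXbP : ∀ ω, XbP ω = X ω + K ω)
    (X' : Ω → Fin n → ℝ) (hX' : ∀ ω, X' ω = X ω + F (X ω) + (S (X ω)).mulVec (W ω))
    -- the next-step value function V' and the one-step Bellman value V
    (V' : (Fin n → ℝ) → ℝ) (hV'meas : Measurable V')
    (hV'int : Integrable (fun ω => V' (X' ω)) P)
    (V : (Fin n → ℝ) → ℝ)
    (hV : ∀ x, V x = L x + ∫ w, V' (x + F x + (S x).mulVec w) ∂(stdGaussian n))
    -- the C² value function approximation Ṽ and associated Ȳ, Z̄, M̄ (centered at X̄^P)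
    (Vt : (Fin n → ℝ) → ℝ) (hVt : ContDiff ℝ 2 Vt)
    (hVtint : Integrable (fun ω => Vt (X' ω)) P)
    (Zb : Ω → Fin n → ℝ) (hZb : ∀ ω, Zb ω = (S (X ω))ᵀ.mulVec (grad Vt (XbP ω)))
    (Mb : Ω → Matrix (Fin n) (Fin n) ℝ)
    (hMb : ∀ ω, Mb ω = (S (X ω))ᵀ * hess Vt (XbP ω) * S (X ω))
    (hZbint : ∀ i, Integrable (fun ω => Zb ω i) P)
    (hMbint : ∀ i j, Integrable (fun ω => Mb ω i j) P)
    -- the error term δ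
    (δ : Ω → ℝ)
    (hδ : ∀ ω, δ ω = V' (X' ω) - (Vt (XbP ω) + (∑ i, Zb ω i * WP ω i)
      + (1 / 2) * ∑ i, WP ω i * (Mb ω).mulVec (WP ω) i))
    -- the true backward difference ΔY and the drifted Taylor estimator ΔŶ^drift
    (ΔY : Ω → ℝ) (hΔY : ∀ ω, ΔY ω = V' (X' ω) - V (X ω))
    (ΔYd : Ω → ℝ)
    (hΔYd : ∀ ω, ΔYd ω = -L (X ω) + (∑ i, Zb ω i * WP ω i) - (∑ i, Zb ω i * D ω i)
      + (1 / 2) * Matrix.trace (Mb ω *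
        (Matrix.vecMulVec (WP ω) (WP ω) - 1 - Matrix.vecMulVec (D ω) (D ω))))
    -- integrability of all displayed random variables
    (hΔYint : Integrable ΔY P) (hΔYdint : Integrable ΔYd P)
    (hδint : Integrable δ P)
    (hLint : Integrable (fun ω => L (X ω)) P)
    (hVint : Integrable (fun ω => V (X ω)) P) :
    (fun ω => ΔY ω - ΔYd ω) =ᵐ[P] (fun ω => δ ω - (P[δ|𝒢]) ω) := by
  have hmeas := @aux_meas Ω 𝒢 n X K hX hK F hF S hS D hD XbP hXbP V' hV'meas Vt hVt Zb hZb Mb hMb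
  have hδ' : δ = fun ω => (fun p : Ω × (Fin n → ℝ) =>
      V' (X p.1 + F (X p.1) + (S (X p.1)).mulVec p.2)
      - (Vt (XbP p.1) + (∑ i, Zb p.1 i * (p.2 + D p.1) i)
      + (1 / 2) * ∑ i, (p.2 + D p.1) i * (Mb p.1).mulVec (p.2 + D p.1) i)) (id ω, W ω) := by
    funext ω
    simp only [hδ, hWP, hX', id]
  have hid : @Measurable Ω Ω mΩ 𝒢 id := fun s hs => h𝒢 s hs
  have hind : @IndepFun Ω Ω (Fin n → ℝ) mΩ 𝒢 inferInstance id W P := by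
    refine (@IndepFun_iff_Indep Ω Ω (Fin n → ℝ) mΩ 𝒢 inferInstance id W P).2 ?_
    rw [MeasurableSpace.comap_id]
    exact hWindep.symm
  have key := @aux_condExp Ω Ω (Fin n → ℝ) mΩ 𝒢 inferInstance inferInstance inferInstance P
    inferInstance id hid W hWmeas hind _ hmeas (hδ' ▸ hδint)
  rw [← hδ', MeasurableSpace.comap_id, hWlaw] at key
  obtain ⟨k1, k2⟩ := key
  filter_upwards [k1, k2] with ω k1 k2
  rw [k2]
  simp only [id] at k1 ⊢
  obtain ⟨p1, p2⟩ := aux_poly n (Vt (XbP ω)) (Zb ω) (D ω) (Mb ω)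
  have v1 : Integrable (fun w => V' (X ω + F (X ω) + (S (X ω)).mulVec w))
      (_root_.stdGaussian n) := by
    refine (k1.add p1).congr (Filter.Eventually.of_forall fun w => ?_)
    simp only [Pi.add_apply]
    ring
  rw [integral_sub v1 p1, p2, hΔY, hΔYd, hδ, hV]
  have t : Matrix.trace (Mb ω *
        (Matrix.vecMulVec (WP ω) (WP ω) - 1 - Matrix.vecMulVec (D ω) (D ω)))
      = (∑ i, WP ω i * (Mb ω).mulVec (WP ω) i)
        - ∑ i, ∑ j, Mb ω i j * ((1 : Matrix (Fin n) (Fin n) ℝ) i j + D ω i * D ω j) := by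
    rw [← Finset.sum_sub_distrib]
    simp only [Matrix.trace, Matrix.diag, Matrix.mul_apply, Matrix.sub_apply,
      Matrix.vecMulVec_apply, Matrix.mulVec, dotProduct]
    refine Finset.sum_congr rfl fun i _ => ?_
    rw [Finset.mul_sum, ← Finset.sum_sub_distrib]
    refine Finset.sum_congr rfl fun j _ => ?_
    have : (1 : Matrix (Fin n) (Fin n) ℝ) j i = (1 : Matrix (Fin n) (Fin n) ℝ) i j := by
      simp only [Matrix.one_apply, eq_comm]
    rw [this]; ring
  rw [t]
  ring
end

section
/- With the sampled-measure drifted setup, the noiseless drifted estimator Ŷ^noiseless := L(X) + Ȳ + ⟨Z̄, D⟩ + ½ tr(M̄ (I + D Dᵀ)) is 𝒢-measurable (so its conditional variance given 𝒢 under P is zero), and its bias satisfies E_P[V(X) − Ŷ^noiseless | 𝒢] = E_Q[δ | 𝒢] almost surely, where Q := P.withDensity(exp(−½‖D‖² + ⟨D, W^P⟩)). -/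
open MeasureTheory ProbabilityTheory Matrix

instance stdG_prob (n : ℕ) : IsProbabilityMeasure (_root_.stdGaussian n) := by
  unfold _root_.stdGaussian; infer_instance

lemma gauss1 (d : ℝ) (s : Set ℝ) (hs : MeasurableSet s) :
    ∫⁻ w, ENNReal.ofReal (Real.exp (-(1 / 2) * d ^ 2 + d * w)) * s.indicator 1 (w - d)
      ∂(gaussianReal 0 1) = gaussianReal 0 1 s := by
  rw [gaussianReal_of_var_ne_zero 0 one_ne_zero]
  have hm : Measurable (fun w : ℝ => s.indicator (1 : ℝ → ENNReal) (w - d)) :=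
    (measurable_one.indicator hs).comp (by fun_prop)
  rw [lintegral_withDensity_eq_lintegral_mul _ (measurable_gaussianPDF 0 1) (by fun_prop),
    withDensity_apply _ hs, ← lintegral_indicator hs,
    ← lintegral_sub_right_eq_self (s.indicator (gaussianPDF 0 1)) d]
  refine lintegral_congr fun w => ?_
  have key : gaussianPDF 0 1 w * ENNReal.ofReal (Real.exp (-(1 / 2) * d ^ 2 + d * w))
      = gaussianPDF 0 1 (w - d) := by
    unfold gaussianPDF
    rw [← ENNReal.ofReal_mul (gaussianPDFReal_nonneg _ _ _)]
    congr 1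
    unfold gaussianPDFReal
    rw [mul_assoc, ← Real.exp_add]
    congr 2
    simp
    ring
  simp only [Pi.mul_apply]
  rw [← mul_assoc, key]
  by_cases h : w - d ∈ s <;> simp [h]

lemma gaussN {n : ℕ} (d : Fin n → ℝ) :
    Measure.map (fun w => w - d) ((_root_.stdGaussian n).withDensity fun w =>
      ENNReal.ofReal (Real.exp (-(1 / 2) * (∑ i, (d i) ^ 2) + ∑ i, d i * w i)))
    = _root_.stdGaussian n := by
  symm
  refine Measure.pi_eq fun s hs => ?_
  rw [Measure.map_apply (by fun_prop) (MeasurableSet.univ_pi hs),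
    withDensity_apply _ ((MeasurableSet.univ_pi hs).preimage (by fun_prop)),
    ← lintegral_indicator ((MeasurableSet.univ_pi hs).preimage (by fun_prop))]
  have hm : ∀ i, Measurable (fun w : ℝ =>
      ENNReal.ofReal (Real.exp (-(1 / 2) * d i ^ 2 + d i * w)) *
        (s i).indicator (1 : ℝ → ENNReal) (w - d i)) := fun i =>
    Measurable.mul (by fun_prop)
      ((measurable_one.indicator (hs i)).comp (by fun_prop : Measurable fun w : ℝ => w - d i))
  have hind : iIndepFun (fun i (w : Fin n → ℝ) =>
      ENNReal.ofReal (Real.exp (-(1 / 2) * d i ^ 2 + d i * w i)) *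
        (s i).indicator (1 : ℝ → ENNReal) (w i - d i)) (_root_.stdGaussian n) :=
    iIndepFun_pi (μ := fun _ : Fin n => gaussianReal 0 1) fun i => (hm i).aemeasurable
  have := lintegral_prod_eq_prod_lintegral_of_indepFun Finset.univ _ hind
    (fun i => (hm i).comp (measurable_pi_apply i))
  have h2 : ∀ i, ∫⁻ w, ENNReal.ofReal (Real.exp (-(1 / 2) * d i ^ 2 + d i * w i)) *
        (s i).indicator (1 : ℝ → ENNReal) (w i - d i) ∂(_root_.stdGaussian n)
        = gaussianReal 0 1 (s i) := by
    intro i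
    rw [← gauss1 (d i) (s i) (hs i)]
    exact (measurePreserving_eval (fun _ : Fin n => gaussianReal 0 1) i).lintegral_comp (hm i)
  simp_rw [h2] at this
  rw [← this]
  refine lintegral_congr fun w => ?_
  rw [Finset.prod_mul_distrib, ← ENNReal.ofReal_prod_of_nonneg (fun _ _ => (Real.exp_pos _).le),
    ← Real.exp_sum, Finset.sum_add_distrib, ← Finset.mul_sum]
  by_cases h : ∀ i, w i - d i ∈ s i
  · have : w ∈ (fun w => w - d) ⁻¹' Set.univ.pi s := by
      simpa [Set.mem_pi] using h
    rw [Set.indicator_of_mem this]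
    simp [h]
  · have : w ∉ (fun w => w - d) ⁻¹' Set.univ.pi s := by
      simpa [Set.mem_pi] using h
    rw [Set.indicator_of_notMem this]
    push Not at h
    obtain ⟨i, hi⟩ := h
    rw [Finset.prod_eq_zero (Finset.mem_univ i) (by simp [hi]), mul_zero]

lemma jointlaw {Ω Ω' : Type*} [mΩ : MeasurableSpace Ω] [mΩ' : MeasurableSpace Ω']
    (P : Measure Ω) [IsProbabilityMeasure P] {n : ℕ} (G : Ω → Ω') (hG : Measurable G)
    (W : Ω → Fin n → ℝ) (hW : Measurable W) (hlaw : Measure.map W P = _root_.stdGaussian n)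
    (hind : IndepFun G W P) (d : Ω' → Fin n → ℝ) (hd : Measurable d) :
    Measure.map (fun ω => (G ω, W ω - d (G ω))) (P.withDensity fun ω =>
      ENNReal.ofReal (Real.exp (-(1 / 2) * (∑ i, (d (G ω) i) ^ 2) + ∑ i, d (G ω) i * W ω i)))
    = (P.map G).prod (_root_.stdGaussian n) := by
  have hd' : ∀ i, Measurable fun x => d x i := fun i => (measurable_pi_apply i).comp hd
  have hW' : ∀ i, Measurable fun x => W x i := fun i => (measurable_pi_apply i).comp hW
  have hdG : ∀ i, Measurable fun x => d (G x) i := fun i => (hd' i).comp hG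
  have : IsProbabilityMeasure (P.map G) := Measure.isProbabilityMeasure_map hG.aemeasurable
  refine Measure.ext_of_lintegral _ fun h hh => ?_
  rw [lintegral_map hh (by fun_prop),
    lintegral_withDensity_eq_lintegral_mul _ (by fun_prop) (by fun_prop),
    lintegral_prod _ hh.aemeasurable]
  have hj := hind.map_prod_eq_prod_map_map hG.aemeasurable hW.aemeasurable
  rw [hlaw] at hj
  have hmm : Measurable (fun p : Ω' × (Fin n → ℝ) =>
      ENNReal.ofReal (Real.exp (-(1 / 2) * (∑ i, (d p.1 i) ^ 2) + ∑ i, d p.1 i * p.2 i))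
        * h (p.1, p.2 - d p.1)) := by
    have : ∀ i, Measurable fun p : Ω' × (Fin n → ℝ) => d p.1 i :=
      fun i => (hd' i).comp measurable_fst
    fun_prop
  calc _ = ∫⁻ p, ENNReal.ofReal (Real.exp (-(1 / 2) * (∑ i, (d p.1 i) ^ 2) + ∑ i, d p.1 i * p.2 i))
        * h (p.1, p.2 - d p.1) ∂(Measure.map (fun ω => (G ω, W ω)) P) := by
        rw [lintegral_map hmm (by fun_prop)]; rfl
    _ = _ := by
        rw [hj, lintegral_prod _ hmm.aemeasurable]
        refine lintegral_congr fun x => ?_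
        conv_rhs => rw [← gaussN (d x)]
        rw [lintegral_map (by fun_prop) (by fun_prop),
          lintegral_withDensity_eq_lintegral_mul _ (by fun_prop) (by fun_prop)]
        rfl

lemma condlaw {Ω Ω' : Type*} [mΩ : MeasurableSpace Ω] [mΩ' : MeasurableSpace Ω']
    (Q : Measure Ω) {n : ℕ} (G : Ω → Ω') (hG : Measurable G)
    (W : Ω → Fin n → ℝ) (hW : Measurable W) (μ : Measure Ω') [IsProbabilityMeasure μ]
    (hj : Measure.map (fun ω => (G ω, W ω)) Q = μ.prod (_root_.stdGaussian n))
    (f : Ω' × (Fin n → ℝ) → ℝ) (hf : Measurable f)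
    (hint : Integrable (fun ω => f (G ω, W ω)) Q) :
    (∀ᵐ ω ∂Q, Integrable (fun w => f (G ω, w)) (_root_.stdGaussian n)) ∧
    (fun ω => ∫ w, f (G ω, w) ∂(_root_.stdGaussian n)) =ᵐ[Q]
      Q[fun ω => f (G ω, W ω) | mΩ'.comap G] := by
  have hGW : Measurable (fun ω => (G ω, W ω)) := by fun_prop
  have hmap : Measure.map G Q = μ := by
    have : Measure.map Prod.fst (Measure.map (fun ω => (G ω, W ω)) Q) = μ := by
      rw [hj, Measure.map_fst_prod]; simp
    rwa [Measure.map_map measurable_fst hGW] at this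
  have hQp : IsProbabilityMeasure Q := by
    constructor
    have : Measure.map G Q Set.univ = 1 := by rw [hmap]; simp
    rwa [Measure.map_apply hG MeasurableSet.univ] at this
  have hI : Integrable f (μ.prod (_root_.stdGaussian n)) := by
    rw [← hj]
    exact (integrable_map_measure hf.aestronglyMeasurable hGW.aemeasurable).2 hint
  have hsm : StronglyMeasurable (fun x => ∫ w, f (x, w) ∂(_root_.stdGaussian n)) :=
    StronglyMeasurable.integral_prod_right (f := fun x w => f (x, w)) hf.stronglyMeasurable
  have hIl : Integrable (fun ω => ∫ w, f (G ω, w) ∂(_root_.stdGaussian n)) Q := by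
    have := hI.integral_prod_left
    rw [← hmap] at this
    exact (integrable_map_measure hsm.aestronglyMeasurable hG.aemeasurable).1 this
  refine ⟨?_, ?_⟩
  · have := hI.prod_right_ae
    rw [← hmap] at this
    exact ae_of_ae_map hG.aemeasurable this
  · refine ae_eq_condExp_of_forall_setIntegral_eq hG.comap_le hint
      (fun _ _ _ => hIl.integrableOn) ?_ ?_
    · rintro _ ⟨s, hs, rfl⟩ -
      have h1 := setIntegral_map (μ := Q) (g := G) hs hsm.aestronglyMeasurable hG.aemeasurable
      have h2 := setIntegral_map (μ := Q) (g := fun ω => (G ω, W ω))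
        (hs.prod MeasurableSet.univ) hf.aestronglyMeasurable hGW.aemeasurable
      have h3 : (fun ω => (G ω, W ω)) ⁻¹' (s ×ˢ Set.univ) = G ⁻¹' s := by ext; simp
      rw [← h1, ← h3, ← h2, hj, setIntegral_prod _ hI.integrableOn, hmap]
      simp
    · exact (hsm.comp_measurable (comap_measurable G)).aestronglyMeasurable

lemma mom1i {n : ℕ} (i : Fin n) : Integrable (fun w : Fin n → ℝ => w i) (_root_.stdGaussian n) := by
  have h : Integrable (fun x : ℝ => x) (gaussianReal 0 1) :=
    (memLp_id_gaussianReal (μ := 0) (v := 1) 1).integrable (by simp)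
  exact (measurePreserving_eval (fun _ : Fin n => gaussianReal 0 1) i).integrable_comp_of_integrable h

lemma mom1 {n : ℕ} (i : Fin n) : ∫ w, w i ∂(_root_.stdGaussian n) = 0 := by
  have := integral_map (μ := _root_.stdGaussian n) (measurable_pi_apply i).aemeasurable
    (f := fun x : ℝ => x) (by fun_prop)
  rw [← this]
  rw [_root_.stdGaussian, (measurePreserving_eval (fun _ : Fin n => gaussianReal 0 1) i).map_eq]
  exact integral_id_gaussianReal

lemma mom2 {n : ℕ} (i j : Fin n) :
    Integrable (fun w : Fin n → ℝ => w i * w j) (_root_.stdGaussian n) ∧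
    ∫ w, w i * w j ∂(_root_.stdGaussian n) = if i = j then 1 else 0 := by
  by_cases hij : i = j
  · subst hij
    have hL := memLp_id_gaussianReal (μ := 0) (v := 1) 2
    have h : Integrable (fun x : ℝ => x * x) (gaussianReal 0 1) := by
      simpa [sq] using hL.integrable_sq
    refine ⟨(measurePreserving_eval (fun _ : Fin n => gaussianReal 0 1) i).integrable_comp_of_integrable h, ?_⟩
    have := integral_map (μ := _root_.stdGaussian n) (measurable_pi_apply i).aemeasurable
      (f := fun x : ℝ => x * x) (by fun_prop)
    rw [← this]
    rw [_root_.stdGaussian, (measurePreserving_eval (fun _ : Fin n => gaussianReal 0 1) i).map_eq]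
    have hv := variance_eq_sub hL
    rw [variance_id_gaussianReal] at hv
    have h0 : ∫ x, id x ∂(gaussianReal 0 1) = 0 := integral_id_gaussianReal
    rw [h0] at hv
    simp [sq] at hv
    simp [← hv]
  · have hind : iIndepFun (fun i (w : Fin n → ℝ) => w i) (_root_.stdGaussian n) :=
      iIndepFun_pi (μ := fun _ : Fin n => gaussianReal 0 1) (X := fun _ x => x)
        fun i => aemeasurable_id
    have h2 := hind.indepFun hij
    refine ⟨h2.integrable_mul (mom1i i) (mom1i j), ?_⟩
    rw [h2.integral_fun_mul_eq_mul_integral (mom1i i).aestronglyMeasurable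
      (mom1i j).aestronglyMeasurable, mom1]
    simp [hij]

lemma quad {n : ℕ} (y : ℝ) (z d : Fin n → ℝ) (M : Matrix (Fin n) (Fin n) ℝ) :
    Integrable (fun w : Fin n → ℝ => y + (∑ i, z i * (w + d) i)
      + (1 / 2) * ∑ i, (w + d) i * M.mulVec (w + d) i) (_root_.stdGaussian n) ∧
    ∫ w, (y + (∑ i, z i * (w + d) i)
      + (1 / 2) * ∑ i, (w + d) i * M.mulVec (w + d) i) ∂(_root_.stdGaussian n)
     = y + (∑ i, z i * d i)
      + (1 / 2) * Matrix.trace (M * (1 + Matrix.vecMulVec d d)) := by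
  have e : ∀ w : Fin n → ℝ, y + (∑ i, z i * (w + d) i)
      + (1 / 2) * ∑ i, (w + d) i * M.mulVec (w + d) i =
      y + (∑ i, (z i * w i + z i * d i)) + (1 / 2) * ∑ i, ∑ j,
        (M i j * (w i * w j) + (M i j * d j) * w i + (M i j * d i) * w j + M i j * d i * d j) := by
    intro w
    simp only [Matrix.mulVec, dotProduct, Pi.add_apply, Finset.mul_sum]
    congr 1
    · congr 1; exact Finset.sum_congr rfl fun i _ => by ring
    · exact Finset.sum_congr rfl fun i _ => Finset.sum_congr rfl fun j _ => by ring
  simp_rw [e]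
  have i1 : ∀ i, Integrable (fun w : Fin n → ℝ => z i * w i + z i * d i) (_root_.stdGaussian n) :=
    fun i => ((mom1i i).const_mul _).add (integrable_const _)
  have a1 := fun i j => ((mom2 (n := n) i j).1.const_mul (M i j))
  have a2 := fun i j : Fin n => ((mom1i i).const_mul (M i j * d j))
  have a3 := fun i j : Fin n => ((mom1i j).const_mul (M i j * d i))
  have a12 : ∀ i j, Integrable (fun w : Fin n → ℝ => M i j * (w i * w j) + (M i j * d j) * w i)
      (_root_.stdGaussian n) := fun i j => (a1 i j).add (a2 i j)
  have a123 : ∀ i j, Integrable (fun w : Fin n → ℝ => M i j * (w i * w j) + (M i j * d j) * w i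
      + (M i j * d i) * w j) (_root_.stdGaussian n) := fun i j => (a12 i j).add (a3 i j)
  have i2 : ∀ i j, Integrable (fun w : Fin n → ℝ =>
      M i j * (w i * w j) + (M i j * d j) * w i + (M i j * d i) * w j + M i j * d i * d j)
      (_root_.stdGaussian n) :=
    fun i j => (a123 i j).add (integrable_const _)
  have j1 := integrable_finsetSum Finset.univ fun i _ => i1 i
  have j2 : Integrable (fun w : Fin n → ℝ => (1 / 2) * ∑ i, ∑ j,
      (M i j * (w i * w j) + (M i j * d j) * w i + (M i j * d i) * w j + M i j * d i * d j))
      (_root_.stdGaussian n) :=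
    (integrable_finsetSum Finset.univ fun i _ =>
      integrable_finsetSum Finset.univ fun j _ => i2 i j).const_mul (1 / 2)
  have j0 : Integrable (fun w : Fin n → ℝ => y + ∑ i, (z i * w i + z i * d i)) (_root_.stdGaussian n) := (integrable_const (μ := _root_.stdGaussian n) y).add j1
  refine ⟨j0.add j2, ?_⟩
  have v1 : ∀ i, ∫ w, (z i * w i + z i * d i) ∂(_root_.stdGaussian n) = z i * d i := fun i => by
    rw [integral_add ((mom1i i).const_mul _) (integrable_const _), integral_const_mul, mom1]
    simp
  have v2 : ∀ i j, ∫ w, (M i j * (w i * w j) + (M i j * d j) * w i + (M i j * d i) * w j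
      + M i j * d i * d j) ∂(_root_.stdGaussian n)
      = M i j * (if i = j then 1 else 0) + M i j * d i * d j := fun i j => by
    rw [integral_add (a123 i j) (integrable_const _),
      integral_add (a12 i j) (a3 i j), integral_add (a1 i j) (a2 i j),
      integral_const_mul, integral_const_mul, integral_const_mul, mom1, mom1, (mom2 i j).2]
    simp
  rw [integral_add j0 j2, integral_add (integrable_const _) j1,
    integral_finsetSum _ fun i _ => i1 i, integral_const_mul,
    integral_finsetSum _ fun i _ => integrable_finsetSum Finset.univ fun j _ => i2 i j]
  simp_rw [integral_finsetSum _ fun j _ => i2 _ j, v1, v2]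
  simp only [integral_const, probReal_univ, one_smul]
  congr 2
  simp only [mul_add, mul_one, Matrix.trace_add, Finset.sum_add_distrib]
  congr 1
  · simp [Matrix.trace]
  · simp only [Matrix.trace, Matrix.diag, Matrix.mul_apply, Matrix.vecMulVec_apply]
    exact Finset.sum_congr rfl fun i _ => Finset.sum_congr rfl fun j _ => by ring

lemma measInv {A : Type*} [MeasurableSpace A] {n : ℕ} (T : A → Matrix (Fin n) (Fin n) ℝ)
    (hT : ∀ i j, Measurable fun a => T a i j) (i j : Fin n) :
    Measurable fun a => (T a)⁻¹ i j := by
  have hdet : ∀ U : A → Matrix (Fin n) (Fin n) ℝ, (∀ i j, Measurable fun a => U a i j) →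
      Measurable fun a => (U a).det := by
    intro U hU
    simp only [Matrix.det_apply']
    fun_prop
  simp only [Matrix.inv_def, Ring.inverse_eq_inv', Matrix.smul_apply, smul_eq_mul,
    Matrix.adjugate_apply]
  refine (hdet T hT).inv.mul (hdet _ fun k l => ?_)
  by_cases hk : k = j
  · subst hk; simp
  · simpa [Matrix.updateRow_ne hk] using hT k l

lemma measMulVec {A : Type*} [MeasurableSpace A] {n : ℕ} (T : A → Matrix (Fin n) (Fin n) ℝ)
    (hT : ∀ i j, Measurable fun a => T a i j) (v : A → Fin n → ℝ) (hv : Measurable v) :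
    Measurable fun a => (T a).mulVec (v a) := by
  refine measurable_pi_lambda _ fun i => ?_
  simp only [Matrix.mulVec, dotProduct]
  fun_prop

lemma measMul {A : Type*} [MeasurableSpace A] {n : ℕ} (T U : A → Matrix (Fin n) (Fin n) ℝ)
    (hT : ∀ i j, Measurable fun a => T a i j) (hU : ∀ i j, Measurable fun a => U a i j)
    (i j : Fin n) :
    Measurable fun a => (T a * U a) i j := by
  simp only [Matrix.mul_apply]
  fun_prop

lemma measGrad {n : ℕ} (f : (Fin n → ℝ) → ℝ) (hf : ContDiff ℝ 2 f) : Measurable (grad f) := by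
  refine measurable_pi_lambda _ fun i => ?_
  have h : Continuous (fderiv ℝ f) := hf.continuous_fderiv (by norm_num)
  exact (h.clm_apply continuous_const).measurable

lemma measHess {n : ℕ} (f : (Fin n → ℝ) → ℝ) (i j : Fin n) :
    Measurable fun x => hess f x i j := by
  simp only [hess, Matrix.of_apply]
  exact measurable_fderiv_apply_const ℝ _ _

lemma measf {A : Type*} [MeasurableSpace A] {n : ℕ} (X K D Xb Z : A → Fin n → ℝ)
    (hX : Measurable X) (hK : Measurable K) (hD : Measurable D) (hXb : Measurable Xb)
    (hZ : Measurable Z) (T M : A → Matrix (Fin n) (Fin n) ℝ)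
    (hT : ∀ i j, Measurable fun a => T a i j) (hM : ∀ i j, Measurable fun a => M a i j)
    (V' Vt : (Fin n → ℝ) → ℝ) (hV' : Measurable V') (hVt : Measurable Vt) :
    Measurable fun p : A × (Fin n → ℝ) =>
      V' (X p.1 + K p.1 + (T p.1).mulVec (p.2 + D p.1)) -
        (Vt (Xb p.1) + (∑ i, Z p.1 i * (p.2 + D p.1) i)
          + (1 / 2) * ∑ i, (p.2 + D p.1) i * (M p.1).mulVec (p.2 + D p.1) i) := by
  have h1 : Measurable fun p : A × (Fin n → ℝ) => p.2 + D p.1 := by fun_prop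
  have h2 := measMulVec (fun p : A × (Fin n → ℝ) => T p.1)
    (fun i j => (hT i j).comp measurable_fst) _ h1
  have h3 := measMulVec (fun p : A × (Fin n → ℝ) => M p.1)
    (fun i j => (hM i j).comp measurable_fst) _ h1
  fun_prop

lemma measY {A : Type*} [MeasurableSpace A] {n : ℕ} (D Z : A → Fin n → ℝ)
    (hD : Measurable D) (hZ : Measurable Z) (M : A → Matrix (Fin n) (Fin n) ℝ)
    (hM : ∀ i j, Measurable fun a => M a i j)
    (l y : A → ℝ) (hl : Measurable l) (hy : Measurable y) :
    Measurable fun a => l a + y a + (∑ i, Z a i * D a i)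
      + (1 / 2) * Matrix.trace (M a * (1 + Matrix.vecMulVec (D a) (D a))) := by
  have h : Measurable fun a => Matrix.trace (M a * (1 + Matrix.vecMulVec (D a) (D a))) := by
    simp only [Matrix.trace, Matrix.diag]
    refine Finset.measurable_sum _ fun i _ => measMul _ _ hM (fun i j => ?_) i i
    simp only [Matrix.add_apply, Matrix.vecMulVec_apply]
    fun_prop
  fun_prop

lemma measV {n : ℕ} (L V' : (Fin n → ℝ) → ℝ) (hL : Measurable L) (hV' : Measurable V')
    (F : (Fin n → ℝ) → Fin n → ℝ) (hF : Measurable F)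
    (S : (Fin n → ℝ) → Matrix (Fin n) (Fin n) ℝ) (hS : ∀ i j, Measurable fun x => S x i j) :
    Measurable fun x => L x + ∫ w, V' (x + F x + (S x).mulVec w) ∂(_root_.stdGaussian n) := by
  refine hL.add (StronglyMeasurable.integral_prod_right
    (f := fun x w => V' (x + F x + (S x).mulVec w)) ?_).measurable
  refine (Measurable.stronglyMeasurable ?_)
  have h2 := measMulVec (fun p : (Fin n → ℝ) × (Fin n → ℝ) => S p.1)
    (fun i j => (hS i j).comp measurable_fst) (fun p => p.2) measurable_snd
  simp only [Function.uncurry_def]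
  fun_prop

/-- **The drifted noiseless estimator: measurability and bias under the sampled measure.**
With the sampled-measure drifted setup, the noiseless drifted estimator
`Ŷ^noiseless := L(X) + Ȳ + ⟨Z̄,D⟩ + ½ tr(M̄(I + DDᵀ))` is `𝒢`-measurable (so its conditional
variance given `𝒢` under `P` is zero), and its bias satisfies
`E_P[V(X) − Ŷ^noiseless | 𝒢] = E_Q[δ | 𝒢]` almost surely, where
`Q := P.withDensity(exp(−½‖D‖² + ⟨D, W^P⟩))`. -/
theorem drifted_noiseless_bias
    {Ω : Type*} (𝒢 : MeasurableSpace Ω) [mΩ : MeasurableSpace Ω]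
    (P : Measure Ω) [IsProbabilityMeasure P]
    {n : ℕ} (h𝒢 : 𝒢 ≤ mΩ)
    -- the sampled noise W^P : i.i.d. standard normal coordinates, independent of 𝒢
    (WP : Ω → Fin n → ℝ) (hWPmeas : Measurable WP)
    (hWPlaw : Measure.map WP P = stdGaussian n)
    (hWPindep : Indep (MeasurableSpace.comap WP inferInstance) 𝒢 P)
    -- the current state X and the drift K are 𝒢-measurable; dynamics data F, Σ, L
    (X K : Ω → Fin n → ℝ) (hX : Measurable[𝒢] X) (hK : Measurable[𝒢] K)
    (F : (Fin n → ℝ) → Fin n → ℝ) (hF : Measurable F)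
    (S : (Fin n → ℝ) → Matrix (Fin n) (Fin n) ℝ) (hS : ∀ i j, Measurable fun x => S x i j)
    (hSinv : ∀ᵐ ω ∂P, IsUnit (S (X ω)).det)
    (L : (Fin n → ℝ) → ℝ) (hL : Measurable L)
    -- D := Σ(X)⁻¹ (F(X) − K), bounded; W^Q := W^P − D; X̄^P := X + K
    (D : Ω → Fin n → ℝ) (hD : ∀ ω, D ω = (S (X ω))⁻¹.mulVec (F (X ω) - K ω))
    (hDbound : ∃ C, ∀ ω i, |D ω i| ≤ C)
    (WQ : Ω → Fin n → ℝ) (hWQ : ∀ ω, WQ ω = WP ω - D ω)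
    (XbP : Ω → Fin n → ℝ) (hXbP : ∀ ω, XbP ω = X ω + K ω)
    (X' : Ω → Fin n → ℝ) (hX' : ∀ ω, X' ω = X ω + K ω + (S (X ω)).mulVec (WP ω))
    -- the tilted (on-policy) measure Q
    (Q : Measure Ω)
    (hQ : Q = P.withDensity fun ω =>
      ENNReal.ofReal (Real.exp (-(1 / 2) * (∑ i, (D ω i) ^ 2) + ∑ i, D ω i * WP ω i)))
    -- the next-step value function V' and the one-step Bellman value V
    (V' : (Fin n → ℝ) → ℝ) (hV'meas : Measurable V')
    (hV'intP : Integrable (fun ω => V' (X' ω)) P)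
    (hV'intQ : Integrable (fun ω => V' (X' ω)) Q)
    (V : (Fin n → ℝ) → ℝ)
    (hV : ∀ x, V x = L x + ∫ w, V' (x + F x + (S x).mulVec w) ∂(stdGaussian n))
    -- the C² value function approximation Ṽ and associated Ȳ, Z̄, M̄ (centered at X̄^P)
    (Vt : (Fin n → ℝ) → ℝ) (hVt : ContDiff ℝ 2 Vt)
    (Zb : Ω → Fin n → ℝ) (hZb : ∀ ω, Zb ω = (S (X ω))ᵀ.mulVec (grad Vt (XbP ω)))
    (Mb : Ω → Matrix (Fin n) (Fin n) ℝ)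
    (hMb : ∀ ω, Mb ω = (S (X ω))ᵀ * hess Vt (XbP ω) * S (X ω))
    (hZbintP : ∀ i, Integrable (fun ω => Zb ω i) P)
    (hZbintQ : ∀ i, Integrable (fun ω => Zb ω i) Q)
    (hMbintP : ∀ i j, Integrable (fun ω => Mb ω i j) P)
    (hMbintQ : ∀ i j, Integrable (fun ω => Mb ω i j) Q)
    -- the error term δ, integrable under both measures
    (δ : Ω → ℝ)
    (hδ : ∀ ω, δ ω = V' (X' ω) - (Vt (XbP ω) + (∑ i, Zb ω i * WP ω i)
      + (1 / 2) * ∑ i, WP ω i * (Mb ω).mulVec (WP ω) i))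
    (hδintP : Integrable δ P) (hδintQ : Integrable δ Q)
    -- the noiseless drifted estimator
    (Ynl : Ω → ℝ)
    (hYnl : ∀ ω, Ynl ω = L (X ω) + Vt (XbP ω) + (∑ i, Zb ω i * D ω i)
      + (1 / 2) * Matrix.trace (Mb ω * (1 + Matrix.vecMulVec (D ω) (D ω))))
    -- integrability of the remaining displayed random variables
    (hYnlint : Integrable Ynl P)
    (hLint : Integrable (fun ω => L (X ω)) P)
    (hVint : Integrable (fun ω => V (X ω)) P) :
    Measurable[𝒢] Ynl ∧
      P[fun ω => (Ynl ω - (P[Ynl|𝒢]) ω) ^ 2|𝒢] =ᵐ[P] 0 ∧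
      P[fun ω => V (X ω) - Ynl ω|𝒢] =ᵐ[P] Q[δ|𝒢] := by
  obtain rfl : X' = fun ω => X ω + K ω + (S (X ω)).mulVec (WP ω) := funext hX'
  obtain rfl : XbP = fun ω => X ω + K ω := funext hXbP
  have hS𝒢 : ∀ i j, Measurable[𝒢] fun ω => S (X ω) i j := fun i j => (hS i j).comp hX
  have hXb : Measurable[𝒢] fun ω => X ω + K ω := hX.add hK
  have hDm : Measurable[𝒢] D := by
    rw [funext hD]
    exact @measMulVec Ω 𝒢 n _ (@measInv Ω 𝒢 n _ hS𝒢) _ ((hF.comp hX).sub hK)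
  have hZm : Measurable[𝒢] Zb := by
    rw [funext hZb]
    exact @measMulVec Ω 𝒢 n (fun ω => (S (X ω))ᵀ) (fun i j => hS𝒢 j i) _
      ((measGrad Vt hVt).comp hXb)
  have hMm : ∀ i j, Measurable[𝒢] fun ω => Mb ω i j := by
    rw [funext hMb]
    exact @measMul Ω 𝒢 n _ _ (@measMul Ω 𝒢 n (fun ω => (S (X ω))ᵀ) _ (fun i j => hS𝒢 j i)
      (fun i j => (measHess Vt i j).comp hXb)) hS𝒢
  have hVtm : Measurable Vt := hVt.continuous.measurable
  have hYm : Measurable[𝒢] Ynl := by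
    rw [funext hYnl]
    exact @measY Ω 𝒢 n D Zb hDm hZm Mb hMm _ _ (hL.comp hX) (hVtm.comp hXb)
  have hVm : Measurable V := by
    rw [funext hV]; exact measV L V' hL hV'meas F hF S hS
  have hVX : Measurable[𝒢] fun ω => V (X ω) := hVm.comp hX
  refine ⟨hYm, ?_, ?_⟩
  · rw [condExp_of_stronglyMeasurable h𝒢 hYm.stronglyMeasurable hYnlint]
    simp only [sub_self, ne_eq, OfNat.ofNat_ne_zero, not_false_eq_true, zero_pow]
    exact (condExp_zero (m := 𝒢) (μ := P) (E := ℝ)).eventuallyEq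
  rw [condExp_of_stronglyMeasurable (f := fun ω => V (X ω) - Ynl ω) h𝒢 (hVX.sub hYm).stronglyMeasurable (hVint.sub hYnlint)]
  have hDm' : Measurable D := hDm.mono h𝒢 le_rfl
  have hid : @Measurable Ω Ω mΩ 𝒢 id := measurable_id'' h𝒢
  have hindep : @IndepFun Ω Ω (Fin n → ℝ) mΩ 𝒢 _ id WP P := by
    refine (@IndepFun_iff_Indep Ω Ω (Fin n → ℝ) mΩ 𝒢 _ id WP P).2 ?_
    rw [MeasurableSpace.comap_id]
    exact hWPindep.symm
  have hj := @jointlaw Ω Ω mΩ 𝒢 P _ n id hid WP hWPmeas hWPlaw hindep D hDm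
  have hPQ : P ≪ Q := by
    rw [hQ]
    refine withDensity_absolutelyContinuous' ?_ ?_
    · have : ∀ i, Measurable fun ω => WP ω i := fun i => (measurable_pi_apply i).comp hWPmeas
      have : ∀ i, Measurable fun ω => D ω i := fun i => (measurable_pi_apply i).comp hDm'
      fun_prop
    · exact Filter.Eventually.of_forall fun ω => by simp [Real.exp_pos]
  have hQP : Q ≪ P := by rw [hQ]; exact withDensity_absolutelyContinuous _ _
  simp only [id] at hj
  rw [← hQ] at hj
  have hprob : @IsProbabilityMeasure Ω 𝒢 (@Measure.map Ω Ω mΩ 𝒢 id P) :=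
    @Measure.isProbabilityMeasure_map Ω Ω mΩ 𝒢 P _ id (@Measurable.aemeasurable Ω Ω mΩ 𝒢 id P hid)
  have hfm := @measf Ω 𝒢 n X K D _ Zb hX hK hDm hXb hZm (fun ω => S (X ω)) Mb hS𝒢 hMm V' Vt
    hV'meas hVtm
  have hδ' : δ = fun ω => (fun p : Ω × (Fin n → ℝ) =>
      V' (X p.1 + K p.1 + (S (X p.1)).mulVec (p.2 + D p.1)) -
        (Vt (X p.1 + K p.1) + (∑ i, Zb p.1 i * (p.2 + D p.1) i)
          + (1 / 2) * ∑ i, (p.2 + D p.1) i * (Mb p.1).mulVec (p.2 + D p.1) i))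
            (id ω, WP ω - D ω) := by
    funext ω
    rw [hδ]
    simp only [id, sub_add_cancel]
  obtain ⟨hae, hce⟩ := @condlaw Ω Ω mΩ 𝒢 Q n id hid (fun ω => WP ω - D ω) (hWPmeas.sub hDm')
    (@Measure.map Ω Ω mΩ 𝒢 id P) hprob hj _ hfm (by rw [← hδ']; exact hδintQ)
  rw [← hδ', MeasurableSpace.comap_id] at hce
  refine Filter.EventuallyEq.trans ?_ (hPQ.ae_eq hce)
  filter_upwards [hPQ.ae_le hae, hSinv] with ω hω hdet
  simp only [id] at hω ⊢
  obtain ⟨hq1, hq2⟩ := quad (Vt (X ω + K ω)) (Zb ω) (D ω) (Mb ω)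
  have hV'i : Integrable (fun w => V' (X ω + K ω + (S (X ω)).mulVec (w + D ω)))
      (_root_.stdGaussian n) := by
    refine (hω.add hq1).congr (Filter.Eventually.of_forall fun w => ?_)
    rw [Pi.add_apply]
    exact sub_add_cancel _ _
  rw [integral_sub hV'i hq1, hq2, hV, hYnl]
  have hx : ∀ w, X ω + K ω + (S (X ω)).mulVec (w + D ω)
      = X ω + F (X ω) + (S (X ω)).mulVec w := by
    intro w
    rw [Matrix.mulVec_add, hD ω, Matrix.mulVec_mulVec, Matrix.mul_nonsing_inv _ hdet,
      Matrix.one_mulVec]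
    abel
  simp_rw [hx]
  ring
end
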